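/- (Period of the holomorphic two-form as Appell's F₂) Let β₁, β₂ be real numbers with β₁ > 0, 0 < β₂ < 1 and β₁ + β₂ > 1/2, set α = β₁ + β₂ − 1/2, and let A, B be real numbers with A > B > 1. For u > 1 let z(u) = 2u − 1 − 2√(u² − u), which lies in (0, 1) and satisfies u = (1+z(u))²/(4z(u)). Then the iterated integral ∫_B^A (A−u)^{β₂−1} (u−B)^{β₂−1} ( ∫₀^{z(u)} x^{β₁+β₂−3/2} (x² + 2(1−2u)x + 1)^{−β₂} dx ) du = Γ(α) Γ(1−β₂) Γ(β₂)² / (4^{α} Γ(β₁+1/2) Γ(2β₂)) · A^{−α} (A−B)^{2β₂−1} · F₂(α; β₁, β₂; 2β₁, 2β₂; 1/A, 1 − B/A). -/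

import Mathlib

open MeasureTheory

/-- Pochhammer symbol `(x)_n` in `ℝ`. -/
noncomputable def rpoch (x : ℝ) (n : ℕ) : ℝ := (ascPochhammer ℝ n).eval x

/-- Appell's hypergeometric series `F₂` (real). -/
noncomputable def appellF2 (a b₁ b₂ c₁ c₂ z₁ z₂ : ℝ) : ℝ :=
  ∑' p : ℕ × ℕ, rpoch a (p.1 + p.2) * rpoch b₁ p.1 * rpoch b₂ p.2 /
    (rpoch c₁ p.1 * rpoch c₂ p.2 * (p.1.factorial : ℝ) * (p.2.factorial : ℝ)) *
    z₁ ^ p.1 * z₂ ^ p.2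

/-- The inverse of the degree-two base change `u = (1+z)²/(4z)`, selecting the
branch `z(u) ∈ (0,1)` for `u > 1`. -/
noncomputable def zOf (u : ℝ) : ℝ := 2 * u - 1 - 2 * Real.sqrt (u ^ 2 - u)

lemma rpoch_zero' (x : ℝ) : rpoch x 0 = 1 := by simp [rpoch]

lemma rpoch_succ' (x : ℝ) (n : ℕ) : rpoch x (n + 1) = rpoch x n * (x + n) := by
  simp [rpoch, ascPochhammer_succ_eval]

lemma rpoch_pos' {x : ℝ} (hx : 0 < x) (n : ℕ) : 0 < rpoch x n := ascPochhammer_pos n x hx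

lemma rpoch_add' (x : ℝ) (m n : ℕ) : rpoch x (m + n) = rpoch x m * rpoch (x + m) n := by
  induction n with
  | zero => simp [rpoch_zero']
  | succ n ih => rw [← add_assoc, rpoch_succ', rpoch_succ', ih]; push_cast; ring

lemma rpoch_dup (b : ℝ) (m : ℕ) :
    rpoch b m * rpoch (b + 1 / 2) m * 4 ^ m = rpoch (2 * b) (2 * m) := by
  induction m with
  | zero => simp [rpoch_zero']
  | succ n ih =>
    rw [show 2 * (n + 1) = 2 * n + 1 + 1 by ring, rpoch_succ', rpoch_succ', rpoch_succ', rpoch_succ',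
      ← ih]
    push_cast; ring

lemma Gamma_rpoch {x : ℝ} (hx : 0 < x) (n : ℕ) :
    Real.Gamma (x + n) = rpoch x n * Real.Gamma x := by
  induction n with
  | zero => simp [rpoch_zero']
  | succ n ih =>
    rw [rpoch_succ']
    push_cast
    rw [← add_assoc, Real.Gamma_add_one (by positivity), ih]; ring

lemma choose_rpoch (a : ℝ) (n : ℕ) :
    Ring.choose (a + n - 1) n = rpoch a n / (n.factorial : ℝ) := by
  rw [Ring.choose_eq_smul, Polynomial.descPochhammer_smeval_eq_ascPochhammer,
    Polynomial.ascPochhammer_smeval_cast, Polynomial.ascPochhammer_smeval_eq_eval, rpoch]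
  rw [show a + n - 1 - n + 1 = a by ring, smul_eq_mul]
  field_simp

lemma hasSum_binom (a : ℝ) {x : ℝ} (hx : |x| < 1) :
    HasSum (fun n : ℕ => rpoch a n / (n.factorial : ℝ) * x ^ n) ((1 - x) ^ (-a)) := by
  have h := (Real.one_div_one_sub_rpow_hasFPowerSeriesOnBall_zero a).hasSum
    (y := x) (by
      have : ‖x‖₊ < 1 := by rw [← NNReal.coe_lt_coe]; simpa using hx
      simpa [enorm_eq_nnnorm] using this)
  have h1 : 0 ≤ 1 - x := by have := abs_lt.1 hx; linarith
  simp only [zero_add, FormalMultilinearSeries.ofScalars_apply_eq, choose_rpoch, smul_eq_mul] at h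
  rw [Real.rpow_neg h1, ← one_div]
  exact h

lemma circle_coeff (a : ℂ) (n : ℕ) (z : ℂ) {R : ℝ} (hR : 0 < R) (hR1 : R < 1) :
    (2 * Real.pi * Complex.I : ℂ)⁻¹ • (∮ w in C(0, R), (z / (w - 0)) ^ n • (w - 0)⁻¹ • (1 + w) ^ a)
      = Ring.choose a n * z ^ n := by
  lift R to NNReal using hR.le
  have h1 := (Complex.one_add_cpow_hasFPowerSeriesAt_zero (a := a))
  have hd : DifferentiableOn ℂ (fun w : ℂ => (1 + w) ^ a) (Metric.closedBall 0 R) := by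
    intro w hw
    apply DifferentiableAt.differentiableWithinAt
    have : 1 + w ∈ Complex.slitPlane := Complex.mem_slitPlane_of_norm_lt_one (by
      have : ‖w‖ ≤ R := by simpa using hw
      linarith)
    fun_prop (disch := assumption)
  have h2 := (hd.hasFPowerSeriesOnBall (by exact_mod_cast hR)).hasFPowerSeriesAt
  rw [← cauchyPowerSeries_apply, ← h1.eq_formalMultilinearSeries h2]
  simp [-FormalMultilinearSeries.apply_eq_prod_smul_coeff]

lemma hasSum_gen_complex (r : ℂ) {x : ℝ} (hx : 0 < x) (hx1 : x < 1) :
    HasSum (fun m : ℕ => Ring.choose (r + 2 * m) m * ((x : ℂ) / (1 + x) ^ 2) ^ m)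
      ((1 + (x : ℂ)) ^ r * (1 + x) ^ 2 / (1 - x * x)) := by
  obtain ⟨R, hxR, hR1⟩ := exists_between hx1
  have hR : 0 < R := hx.trans hxR
  set z : ℂ := (x : ℂ) / (1 + x) ^ 2 with hz
  set q : ℝ := x / (1 + x) ^ 2 * ((1 + R) ^ 2 / R) with hq
  clear_value z
  have hq0 : 0 ≤ q := by positivity
  have hq1 : q < 1 := by
    rw [hq, div_mul_div_comm, div_lt_one (by positivity)]
    nlinarith [mul_pos (sub_pos.2 hxR) (sub_pos.2 (mul_lt_one_of_nonneg_of_lt_one_left hx.le hx1 hR1.le))]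
  have hslit : ∀ w : ℂ, ‖w‖ ≤ R → 1 + w ∈ Complex.slitPlane := fun w hw =>
    Complex.mem_slitPlane_of_norm_lt_one (by linarith)
  have hcirc : ∀ θ, ‖circleMap 0 R θ‖ = R := fun θ => by simp [abs_of_pos hR]
  have hne : ∀ w : ℂ, ‖w‖ ≤ R → (1 - x * w) ≠ 0 := by
    intro w hw h
    have : ‖(x : ℂ) * w‖ = 1 := by rw [← sub_eq_zero.1 h]; simp
    rw [norm_mul, Complex.norm_real, Real.norm_of_nonneg hx.le] at this
    nlinarith
  have hx0 : (1 + (x : ℂ)) ≠ 0 := by exact_mod_cast (by positivity : (1 + x) ≠ 0)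
  have hdg : DifferentiableOn ℂ (fun w : ℂ => (1 + w) ^ r * (1 + x) ^ 2 / (1 - x * w))
      (Metric.closedBall 0 R) := by
    intro w hw
    have hw' : ‖w‖ ≤ R := by simpa using hw
    apply DifferentiableAt.differentiableWithinAt
    have h1 := hslit w hw'
    have h2 := hne w hw'
    fun_prop (disch := assumption)
  have hcauchy := (hdg.diffContOnCl_ball (U := Metric.closedBall 0 R) subset_rfl).two_pi_i_inv_smul_circleIntegral_sub_inv_smul
    (w := (x : ℂ)) (by simpa [abs_of_pos hx] using hxR)
  rw [← hcauchy]
  have hcoef : ∀ m : ℕ, Ring.choose (r + 2 * m) m * z ^ m =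
      (2 * Real.pi * Complex.I : ℂ)⁻¹ • (∮ w in C(0, R), (z * (1 + w) ^ 2 / w) ^ m * w⁻¹ * (1 + w) ^ r) := by
    intro m
    rw [← circle_coeff _ _ _ hR hR1]
    congr 1
    apply circleIntegral.integral_congr hR.le
    intro w hw
    have hw' : ‖w‖ = R := by simpa using hw
    have h1 := Complex.slitPlane_ne_zero (hslit w hw'.le)
    simp only [sub_zero, smul_eq_mul]
    rw [Complex.cpow_add _ _ h1, show (2 * (m : ℂ)) = ((2 * m : ℕ) : ℂ) by push_cast; ring, Complex.cpow_natCast, pow_mul]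
    rw [div_pow, div_pow, mul_pow]; ring
  simp only [hcoef]
  apply HasSum.const_smul
  have hw0 : ∀ θ, circleMap 0 R θ ≠ 0 := fun θ => circleMap_ne_center hR.ne'
  have hcm : Continuous (circleMap 0 R) := continuous_circleMap 0 R
  have hcp : Continuous fun θ => (1 + circleMap 0 R θ) ^ r :=
    (continuous_const.add hcm).cpow continuous_const fun θ => hslit _ (hcirc θ).le
  have hqn : ∀ θ, ‖z * (1 + circleMap 0 R θ) ^ 2 / circleMap 0 R θ‖ ≤ q := by
    intro θ
    have hzn : ‖z‖ = x / (1 + x) ^ 2 := by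
      rw [hz, show (x : ℂ) / (1 + x) ^ 2 = ((x / (1 + x) ^ 2 : ℝ) : ℂ) by push_cast; ring,
        Complex.norm_real, Real.norm_of_nonneg (by positivity)]
    rw [norm_div, norm_mul, norm_pow, hzn, hcirc, hq, mul_div_assoc]
    have : ‖1 + circleMap 0 R θ‖ ≤ 1 + R := by
      refine (norm_add_le _ _).trans ?_
      rw [hcirc]; simp
    gcongr
  refine intervalIntegral.hasSum_integral_of_dominated_convergence
    (fun m θ => q ^ m * ‖(1 + circleMap 0 R θ) ^ r‖) (fun m => ?_) (fun m => ?_) ?_ ?_ ?_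
  · apply Continuous.aestronglyMeasurable
    simp only [deriv_circleMap, smul_eq_mul]
    fun_prop (disch := assumption)
  · refine Filter.Eventually.of_forall fun θ _ => ?_
    simp only [deriv_circleMap, smul_eq_mul]
    rw [norm_mul, norm_mul, norm_mul, norm_mul, norm_inv, hcirc, Complex.norm_I, mul_one,
      norm_pow]
    calc R * (‖z * (1 + circleMap 0 R θ) ^ 2 / circleMap 0 R θ‖ ^ m * R⁻¹ *
          ‖(1 + circleMap 0 R θ) ^ r‖)
        = ‖z * (1 + circleMap 0 R θ) ^ 2 / circleMap 0 R θ‖ ^ m *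
          ‖(1 + circleMap 0 R θ) ^ r‖ := by field_simp
      _ ≤ _ := by
        gcongr
        exact hqn θ
  · exact Filter.Eventually.of_forall fun _ _ => (summable_geometric_of_lt_one hq0 hq1).mul_right _
  · simp only [tsum_mul_right]
    apply Continuous.intervalIntegrable
    fun_prop
  · refine Filter.Eventually.of_forall fun θ _ => HasSum.const_smul _ ?_
    set w := circleMap 0 R θ with hw
    have hg := (hasSum_geometric_of_norm_lt_one ((hqn θ).trans_lt hq1)).mul_right
      (w⁻¹ * (1 + w) ^ r)
    simp only [← hw] at hg
    have hw0' : w ≠ 0 := hw0 θ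
    have hn1 := hne w (hcirc θ).le
    have hwx : w - x ≠ 0 := by
      intro h
      have := hcirc θ
      rw [← hw, sub_eq_zero.1 h, Complex.norm_real, Real.norm_of_nonneg hx.le] at this
      linarith
    have hkey : 1 - z * (1 + w) ^ 2 / w = (w - x) * (1 - x * w) / ((1 + x) ^ 2 * w) := by
      rw [hz]; field_simp; ring
    convert! hg using 1
    · ext m; ring
    · rw [hkey]; simp only [smul_eq_mul]; field_simp

/-- Coefficients of the generating function. -/
noncomputable def cc (b : ℝ) (m : ℕ) : ℝ :=
  rpoch b m * rpoch (b + 1 / 2) m / (rpoch (2 * b) m * (m.factorial : ℝ))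

lemma cc_eq {b : ℝ} (hb : 0 < b) (m : ℕ) :
    cc b m * 4 ^ m = Ring.choose (2 * b - 1 + 2 * m) m := by
  rw [show 2 * b - 1 + 2 * m = (2 * b + m) + m - 1 by ring, choose_rpoch, cc]
  have h1 := rpoch_dup b m
  rw [two_mul m, rpoch_add'] at h1
  have := rpoch_pos' (mul_pos two_pos hb) m
  rw [div_mul_eq_mul_div, h1]
  field_simp

lemma cc_pos {b : ℝ} (hb : 0 < b) (m : ℕ) : 0 < cc b m := by
  have h1 := rpoch_pos' hb m
  have h2 := rpoch_pos' (show 0 < b + 1 / 2 by linarith) m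
  have h3 := rpoch_pos' (show 0 < 2 * b by linarith) m
  unfold cc; positivity

lemma hasSum_cc {b : ℝ} (hb : 0 < b) {x : ℝ} (hx : 0 < x) (hx1 : x < 1) :
    HasSum (fun m : ℕ => cc b m * (4 * x / (1 + x) ^ 2) ^ m) ((1 + x) ^ (2 * b) / (1 - x)) := by
  have h := hasSum_gen_complex ((2 * b - 1 : ℝ) : ℂ) hx hx1
  rw [← Complex.hasSum_ofReal]
  convert! h using 1
  · ext m
    rw [mul_div_assoc, mul_pow, ← mul_assoc, cc_eq hb]
    push_cast [Complex.ofReal_choose]; rfl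
  · have h1 : (1 + x) ^ (2 * b) = (1 + x) ^ (2 * b - 1) * (1 + x) := by
      rw [Real.rpow_sub_one (by positivity)]; field_simp
    have h2 : (1 + x) ^ (2 * b) / (1 - x) = (1 + x) ^ (2 * b - 1) * (1 + x) ^ 2 / (1 - x * x) := by
      have : 1 - x ≠ 0 := by linarith
      have h3 : 1 + x ≠ 0 := by positivity
      rw [show 1 - x * x = (1 - x) * (1 + x) by ring, h1]
      field_simp
    rw [h2]
    push_cast
    rw [Complex.ofReal_cpow (by positivity)]
    push_cast; rfl

lemma beta_int {a b : ℝ} (ha : 0 < a) (hb : 0 < b) :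
    IntegrableOn (fun s : ℝ => s ^ (a - 1) * (1 - s) ^ (b - 1)) (Set.Ioo 0 1) ∧
    ∫ s in Set.Ioo (0 : ℝ) 1, s ^ (a - 1) * (1 - s) ^ (b - 1) =
      Real.Gamma a * Real.Gamma b / Real.Gamma (a + b) := by
  have hc := Complex.betaIntegral_convergent (u := a) (v := b) (by simpa) (by simpa)
  rw [intervalIntegrable_iff_integrableOn_Ioo_of_le zero_le_one] at hc
  have hcongr : Set.EqOn (fun x : ℝ => (x : ℂ) ^ ((a : ℂ) - 1) * (1 - (x : ℂ)) ^ ((b : ℂ) - 1))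
      (fun s : ℝ => ((s ^ (a - 1) * (1 - s) ^ (b - 1) : ℝ) : ℂ)) (Set.Ioo 0 1) := by
    intro s hs
    simp only
    push_cast
    rw [Complex.ofReal_cpow hs.1.le, Complex.ofReal_cpow (by linarith [hs.2])]
    push_cast; rfl
  constructor
  · have := (integrableOn_congr_fun hcongr measurableSet_Ioo).1 hc
    exact_mod_cast this.re
  · have h2 := ProbabilityTheory.beta_eq_betaIntegralReal a b ha hb
    rw [Complex.betaIntegral, intervalIntegral.integral_of_le zero_le_one,
      integral_Ioc_eq_integral_Ioo, setIntegral_congr_fun measurableSet_Ioo hcongr,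
      integral_complex_ofReal, Complex.ofReal_re] at h2
    rw [← h2, ProbabilityTheory.beta]

lemma beta_rpoch {a b : ℝ} (ha : 0 < a) (hb : 0 < b) (n : ℕ) :
    ∫ s in Set.Ioo (0 : ℝ) 1, s ^ (a - 1) * (1 - s) ^ (b - 1) * s ^ n =
      Real.Gamma a * Real.Gamma b / Real.Gamma (a + b) * (rpoch a n / rpoch (a + b) n) := by
  have h := (beta_int (a := a + n) (by positivity) hb).2
  rw [Gamma_rpoch ha, add_right_comm, Gamma_rpoch (add_pos ha hb)] at h
  have h3 := rpoch_pos' (add_pos ha hb) n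
  have h4 := Real.Gamma_pos_of_pos (add_pos ha hb)
  rw [show Real.Gamma a * Real.Gamma b / Real.Gamma (a + b) * (rpoch a n / rpoch (a + b) n) =
    rpoch a n * Real.Gamma a * Real.Gamma b / (rpoch (a + b) n * Real.Gamma (a + b)) by
      field_simp, ← h]
  apply setIntegral_congr_fun measurableSet_Ioo
  intro s hs
  simp only
  rw [add_sub_right_comm, Real.rpow_add hs.1, Real.rpow_natCast]; ring

/-- Termwise integration against a Beta weight. -/
lemma hasSum_beta {ι : Type*} [Countable ι] {a b : ℝ} (ha : 0 < a) (hb : 0 < b)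
    (K : ι → ℝ) (hK0 : ∀ i, 0 ≤ K i) (hK : Summable K) (n : ι → ℕ) (f : ℝ → ℝ)
    (hf : ∀ s ∈ Set.Ioo (0 : ℝ) 1, HasSum (fun i => K i * s ^ n i) (f s)) :
    HasSum (fun i => Real.Gamma a * Real.Gamma b / Real.Gamma (a + b) *
        (K i * (rpoch a (n i) / rpoch (a + b) (n i))))
      (∫ s in Set.Ioo (0 : ℝ) 1, s ^ (a - 1) * (1 - s) ^ (b - 1) * f s) := by
  have h := hasSum_integral_of_dominated_convergence (μ := volume.restrict (Set.Ioo (0 : ℝ) 1))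
    (F := fun i s => s ^ (a - 1) * (1 - s) ^ (b - 1) * (K i * s ^ n i))
    (f := fun s => s ^ (a - 1) * (1 - s) ^ (b - 1) * f s)
    (fun i s => s ^ (a - 1) * (1 - s) ^ (b - 1) * K i) (fun i => ?_) (fun i => ?_) ?_ ?_ ?_
  · convert! h using 1
    ext i
    rw [mul_left_comm, ← beta_rpoch ha hb, ← integral_const_mul]
    congr 1; ext s; ring
  · exact (by fun_prop : Measurable _).aestronglyMeasurable
  · filter_upwards [ae_restrict_mem measurableSet_Ioo] with s hs
    have h1 : 0 ≤ 1 - s := by linarith [hs.2]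
    have h0 := hs.1.le
    have hKi := hK0 i
    rw [Real.norm_of_nonneg (by positivity)]
    gcongr
    exact mul_le_of_le_one_right hKi (pow_le_one₀ h0 hs.2.le)
  · exact Filter.Eventually.of_forall fun s => hK.mul_left _
  · simp only [tsum_mul_left]
    exact (beta_int ha hb).1.mul_const _
  · filter_upwards [ae_restrict_mem measurableSet_Ioo] with s hs
    exact (hf s hs).mul_left _

lemma zOf_facts {u : ℝ} (hu : 1 < u) :
    0 < zOf u ∧ zOf u < 1 ∧ (1 + zOf u) ^ 2 = 4 * u * zOf u := by
  have hs := Real.sq_sqrt (show 0 ≤ u ^ 2 - u by nlinarith)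
  have h0 := Real.sqrt_nonneg (u ^ 2 - u)
  have h1 : Real.sqrt (u ^ 2 - u) < u - 1 / 2 := by
    rw [Real.sqrt_lt' (by linarith)]; nlinarith
  have h2 : u - 1 < Real.sqrt (u ^ 2 - u) := by
    apply Real.lt_sqrt_of_sq_lt; nlinarith
  unfold zOf
  refine ⟨by linarith, by linarith, by nlinarith⟩

lemma phi_lt {x y : ℝ} (hx : 0 < x) (hxy : x < y) (hy : y < 1) :
    4 * x / (1 + x) ^ 2 < 4 * y / (1 + y) ^ 2 := by
  have hy0 := hx.trans hxy
  rw [div_lt_div_iff₀ (by positivity) (by positivity)]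
  nlinarith [mul_pos (sub_pos.2 hxy) (show 0 < 1 - x * y by nlinarith)]

lemma phi_zOf {u : ℝ} (hu : 1 < u) : 4 * zOf u / (1 + zOf u) ^ 2 = 1 / u := by
  obtain ⟨h0, h1, h2⟩ := zOf_facts hu
  rw [h2]; field_simp

lemma summable_cc {b : ℝ} (hb : 0 < b) {u : ℝ} (hu : 1 < u) :
    Summable (fun m : ℕ => cc b m * (1 / u) ^ m) := by
  obtain ⟨h0, h1, h2⟩ := zOf_facts hu
  have := (hasSum_cc hb h0 h1).summable
  rwa [phi_zOf hu] at this

lemma phi_image {u : ℝ} (hu : 1 < u) :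
    (fun x => u * (4 * x / (1 + x) ^ 2)) '' Set.Ioo 0 (zOf u) = Set.Ioo 0 1 := by
  obtain ⟨h0, h1, h2⟩ := zOf_facts hu
  have hu0 : 0 < u := by linarith
  ext t
  simp only [Set.mem_image, Set.mem_Ioo]
  constructor
  · rintro ⟨x, ⟨hx0, hx1⟩, rfl⟩
    refine ⟨by positivity, ?_⟩
    have := phi_lt hx0 hx1 h1
    rw [phi_zOf hu, lt_div_iff₀ hu0] at this
    linarith
  · rintro ⟨ht0, ht1⟩
    have hut : 1 < u / t := by rw [lt_div_iff₀ ht0]; linarith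
    obtain ⟨k0, k1, k2⟩ := zOf_facts hut
    have e := phi_zOf hut
    refine ⟨zOf (u / t), ⟨k0, ?_⟩, by rw [e]; field_simp⟩
    by_contra hcon
    push Not at hcon
    have : 1 / u ≤ 1 / (u / t) := by
      rw [← e, ← phi_zOf hu]
      rcases hcon.eq_or_lt with h | h
      · rw [← h]
      · exact (phi_lt h0 h k1).le
    rw [div_le_div_iff₀ hu0 (by positivity), one_mul, one_mul, div_le_iff₀ ht0] at this
    nlinarith

lemma inner_hasSum {β₁ β₂ α u : ℝ} (hβ₁ : 0 < β₁) (hβ₂1 : β₂ < 1) (hα0 : 0 < α)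
    (hα : α = β₁ + β₂ - 1 / 2) (hu : 1 < u) :
    HasSum (fun m : ℕ => Real.Gamma α * Real.Gamma (1 - β₂) / Real.Gamma (β₁ + 1 / 2) * 4 ^ (-α) *
      (rpoch α m * rpoch β₁ m / (rpoch (2 * β₁) m * (m.factorial : ℝ))) * u ^ (-(α + m)))
      (∫ x in Set.Ioo 0 (zOf u),
          x ^ (β₁ + β₂ - 3 / 2) * (x ^ 2 + 2 * (1 - 2 * u) * x + 1) ^ (-β₂)) := by
  have hu0 : 0 < u := by linarith
  obtain ⟨h0, h1, h2⟩ := zOf_facts hu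
  set F : ℝ → ℝ := fun t => ∑' m : ℕ, cc β₁ m * (1 / u) ^ m * t ^ m with hF
  have hK := summable_cc hβ₁ hu
  have hK0 : ∀ m, 0 ≤ cc β₁ m * (1 / u) ^ m := fun m => by
    have := cc_pos hβ₁ m; positivity
  have hsum := hasSum_beta hα0 (show 0 < 1 - β₂ by linarith) _ hK0 hK id F (by
    intro s hs
    apply Summable.hasSum
    refine hK.of_nonneg_of_le (fun m => mul_nonneg (hK0 m) (pow_nonneg hs.1.le _)) fun m => ?_
    exact mul_le_of_le_one_right (hK0 m) (pow_le_one₀ hs.1.le hs.2.le))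
  have hder : ∀ x ∈ Set.Ioo 0 (zOf u), HasDerivWithinAt (fun x => u * (4 * x / (1 + x) ^ 2))
      (4 * u * (1 - x) / (1 + x) ^ 3) (Set.Ioo 0 (zOf u)) x := by
    intro x hx
    have hx1 : 1 + x ≠ 0 := by linarith [hx.1]
    have := ((((hasDerivAt_id x).const_mul 4).div (((hasDerivAt_id x).const_add 1).pow 2)
      (pow_ne_zero 2 hx1)).const_mul u).hasDerivWithinAt (s := Set.Ioo 0 (zOf u))
    convert! this using 1
    simp only [id]
    field_simp
    simp
    ring
  have hinj : Set.InjOn (fun x => u * (4 * x / (1 + x) ^ 2)) (Set.Ioo 0 (zOf u)) := by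
    apply StrictMonoOn.injOn
    intro x hx y hy hxy
    exact mul_lt_mul_of_pos_left (phi_lt hx.1 hxy (hy.2.trans h1)) hu0
  have hcv := integral_image_eq_integral_abs_deriv_smul measurableSet_Ioo hder hinj
    (fun t => t ^ (α - 1) * (1 - t) ^ (1 - β₂ - 1) * F t)
  rw [phi_image hu] at hcv
  rw [hcv] at hsum
  have hint : ∫ x in Set.Ioo 0 (zOf u), |4 * u * (1 - x) / (1 + x) ^ 3| •
        ((u * (4 * x / (1 + x) ^ 2)) ^ (α - 1) * (1 - u * (4 * x / (1 + x) ^ 2)) ^ (1 - β₂ - 1) *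
          F (u * (4 * x / (1 + x) ^ 2))) =
      (4 * u) ^ α * ∫ x in Set.Ioo 0 (zOf u),
          x ^ (β₁ + β₂ - 3 / 2) * (x ^ 2 + 2 * (1 - 2 * u) * x + 1) ^ (-β₂) := by
    rw [← integral_const_mul]
    apply setIntegral_congr_fun measurableSet_Ioo
    intro x hx
    have hx0 := hx.1
    have hx1 : 0 < 1 - x := by linarith [hx.2]
    have hp : 0 < 1 + x := by linarith
    have hFx : F (u * (4 * x / (1 + x) ^ 2)) = (1 + x) ^ (2 * β₁) / (1 - x) := by
      rw [← (hasSum_cc hβ₁ hx0 (hx.2.trans h1)).tsum_eq, hF]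
      refine tsum_congr fun m => ?_
      rw [mul_pow, ← mul_assoc, mul_assoc (cc β₁ m), ← mul_pow]
      rw [one_div_mul_cancel hu0.ne', one_pow, mul_one]
    have hQ : 0 < x ^ 2 + 2 * (1 - 2 * u) * x + 1 := by
      have := phi_lt hx0 hx.2 h1
      rw [phi_zOf hu, div_lt_div_iff₀ (by positivity) hu0] at this
      nlinarith
    have e1 : 1 - u * (4 * x / (1 + x) ^ 2) = (x ^ 2 + 2 * (1 - 2 * u) * x + 1) / (1 + x) ^ (2 : ℝ) := by
      rw [Real.rpow_two]; field_simp; ring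
    have e2 : u * (4 * x / (1 + x) ^ 2) = (4 * u) * x / (1 + x) ^ (2 : ℝ) := by
      rw [Real.rpow_two]; field_simp
    simp only [smul_eq_mul]
    rw [hFx, e1, e2, abs_of_pos (by positivity), Real.div_rpow (by positivity) (by positivity),
      Real.div_rpow (by positivity) (by positivity), Real.mul_rpow (by positivity) (by positivity),
      ← Real.rpow_mul hp.le, ← Real.rpow_mul hp.le, show 1 - β₂ - 1 = -β₂ by ring,
      show β₁ + β₂ - 3 / 2 = α - 1 by rw [hα]; ring, Real.rpow_sub_one (x := 4 * u) (by positivity)]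
    have e3 : (1 + x) ^ (2 * β₁) = (1 + x) ^ (2 * (α - 1)) * (1 + x) ^ (2 * -β₂) * (1 + x) ^ 3 := by
      rw [← Real.rpow_natCast, ← Real.rpow_add hp, ← Real.rpow_add hp]
      congr 1
      rw [hα]; push_cast; ring
    rw [e3]
    field_simp
  rw [hint] at hsum
  have hfin := hsum.mul_left ((4 * u) ^ (-α))
  have e4 : (4 * u) ^ (-α) * (4 * u) ^ α = 1 := by
    rw [← Real.rpow_add (by positivity)]; simp
  rw [← mul_assoc, e4, one_mul] at hfin
  convert! hfin using 1
  ext m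
  have p1 := rpoch_pos' (show 0 < β₁ + 1 / 2 by linarith) m
  rw [show α + (1 - β₂) = β₁ + 1 / 2 by rw [hα]; ring, neg_add, Real.rpow_add hu0,
    Real.mul_rpow (by norm_num) hu0.le, cc, Real.rpow_neg hu0.le (m : ℝ), Real.rpow_natCast,
    one_div_pow]
  simp only [id]
  generalize rpoch (β₁ + 1 / 2) m = P at *
  have hP := p1.ne'
  field_simp

/-- The period of the holomorphic two-form over the transcendental two-cycle,
expressed through Appell's hypergeometric function `F₂`. -/
theorem statement19 (β₁ β₂ α A B : ℝ)
    (hβ₁ : 0 < β₁) (hβ₂0 : 0 < β₂) (hβ₂1 : β₂ < 1) (hβ : 1 / 2 < β₁ + β₂)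
    (hα : α = β₁ + β₂ - 1 / 2) (hB : 1 < B) (hAB : B < A) :
    ∫ u in Set.Ioo B A,
        (A - u) ^ (β₂ - 1) * (u - B) ^ (β₂ - 1) *
        ∫ x in Set.Ioo 0 (zOf u),
          x ^ (β₁ + β₂ - 3 / 2) * (x ^ 2 + 2 * (1 - 2 * u) * x + 1) ^ (-β₂) =
      Real.Gamma α * Real.Gamma (1 - β₂) * Real.Gamma β₂ ^ (2 : ℕ) /
        ((4 : ℝ) ^ α * Real.Gamma (β₁ + 1 / 2) * Real.Gamma (2 * β₂)) *
      (A ^ (-α) * (A - B) ^ (2 * β₂ - 1)) *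
      appellF2 α β₁ β₂ (2 * β₁) (2 * β₂) (1 / A) (1 - B / A) := by
  have hα0 : 0 < α := by linarith
  have hA0 : 0 < A := by linarith
  have hAB' : 0 < A - B := by linarith
  set J : ℝ → ℝ := fun u => ∫ x in Set.Ioo 0 (zOf u),
          x ^ (β₁ + β₂ - 3 / 2) * (x ^ 2 + 2 * (1 - 2 * u) * x + 1) ^ (-β₂) with hJ
  set y := 1 - B / A with hy
  have hy0 : 0 < y := by rw [hy, sub_pos, div_lt_one hA0]; exact hAB
  have hy1 : y < 1 := by rw [hy]; have : 0 < B / A := by positivity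
                         linarith
  have hAy : A * y = A - B := by rw [hy]; field_simp
  set D : ℕ → ℝ := fun m => Real.Gamma α * Real.Gamma (1 - β₂) / Real.Gamma (β₁ + 1 / 2) * 4 ^ (-α) *
      (rpoch α m * rpoch β₁ m / (rpoch (2 * β₁) m * (m.factorial : ℝ))) with hD
  have hD0 : ∀ m, 0 ≤ D m := by
    intro m
    have g1 := Real.Gamma_pos_of_pos hα0
    have g2 := Real.Gamma_pos_of_pos (show 0 < 1 - β₂ by linarith)
    have g3 := Real.Gamma_pos_of_pos (show 0 < β₁ + 1 / 2 by linarith)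
    have p1 := rpoch_pos' hα0 m
    have p2 := rpoch_pos' hβ₁ m
    have p3 := rpoch_pos' (show 0 < 2 * β₁ by linarith) m
    rw [hD]; positivity
  set K : ℕ × ℕ → ℝ := fun p => D p.1 * A ^ (-(α + p.1)) *
    (rpoch (α + p.1) p.2 / (p.2.factorial : ℝ) * y ^ p.2) with hKdef
  have hK0 : ∀ p, 0 ≤ K p := by
    intro p
    have := hD0 p.1
    have := rpoch_pos' (show 0 < α + p.1 by positivity) p.2
    rw [hKdef]; positivity
  have main : ∀ s : ℝ, 0 < s → s ≤ 1 →
      HasSum (fun p => K p * s ^ p.2) (J (A - (A - B) * s)) := by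
    intro s hs0 hs1
    have hys : y * s < 1 := by nlinarith
    have hpsi : A - (A - B) * s = A * (1 - y * s) := by rw [← hAy]; ring
    have hu1 : 1 < A - (A - B) * s := by nlinarith
    have hJs := inner_hasSum hβ₁ hβ₂1 hα0 hα hu1
    have hfib : ∀ m : ℕ, HasSum (fun n : ℕ => K (m, n) * s ^ n)
        (D m * (A - (A - B) * s) ^ (-(α + m))) := by
      intro m
      have := (hasSum_binom (α + m) (x := y * s) (by rw [abs_of_pos (by positivity)]; exact hys)).mul_left
        (D m * A ^ (-(α + m)))
      rw [hpsi, Real.mul_rpow hA0.le (by linarith), ← mul_assoc]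
      convert! this using 1
      ext n
      simp only [hKdef, mul_pow]; ring
    have hnn : 0 ≤ fun p : ℕ × ℕ => K p * s ^ p.2 := fun p => mul_nonneg (hK0 p) (by positivity)
    have hsm : Summable fun p : ℕ × ℕ => K p * s ^ p.2 := by
      rw [summable_prod_of_nonneg hnn]
      refine ⟨fun m => (hfib m).summable, ?_⟩
      simp only [(hfib _).tsum_eq]
      exact hJs.summable
    have := hsm.hasSum.prod_fiberwise hfib
    have hJe : J (A - (A - B) * s) = _ := hJs.unique this
    rw [hJe]
    exact hsm.hasSum
  have hKs : Summable K := by simpa using (main 1 one_pos le_rfl).summable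
  have hfinal := hasSum_beta hβ₂0 hβ₂0 K hK0 hKs (fun p => p.2) (fun s => J (A - (A - B) * s))
    fun s hs => main s hs.1 hs.2.le
  have himg : (fun s => A - (A - B) * s) '' Set.Ioo 0 1 = Set.Ioo B A := by
    ext u
    simp only [Set.mem_image, Set.mem_Ioo]
    constructor
    · rintro ⟨s, ⟨h0, h1⟩, rfl⟩
      constructor <;> nlinarith
    · rintro ⟨h0, h1⟩
      refine ⟨(A - u) / (A - B), ⟨div_pos (by linarith) hAB', ?_⟩, ?_⟩
      · rw [div_lt_one hAB']; linarith
      · field_simp; ring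
  have hcv := integral_image_eq_integral_abs_deriv_smul (s := Set.Ioo (0 : ℝ) 1)
    (f := fun s => A - (A - B) * s) (f' := fun _ => -(A - B)) measurableSet_Ioo
    (fun s _ => by
      have := (((hasDerivAt_id s).const_mul (A - B)).const_sub A).hasDerivWithinAt
        (s := Set.Ioo (0 : ℝ) 1)
      simpa using this)
    (fun s _ t _ h => by
      have h' : (A - B) * s = (A - B) * t := by simpa using h
      exact mul_left_cancel₀ hAB'.ne' h')
    (fun u => (A - u) ^ (β₂ - 1) * (u - B) ^ (β₂ - 1) * J u)
  rw [himg] at hcv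
  rw [hcv]
  have hint : ∫ s in Set.Ioo (0 : ℝ) 1, |-(A - B)| • ((A - (A - (A - B) * s)) ^ (β₂ - 1) *
      (A - (A - B) * s - B) ^ (β₂ - 1) * J (A - (A - B) * s)) =
      (A - B) ^ (2 * β₂ - 1) *
        ∫ s in Set.Ioo (0 : ℝ) 1, s ^ (β₂ - 1) * (1 - s) ^ (β₂ - 1) * J (A - (A - B) * s) := by
    rw [← integral_const_mul]
    apply setIntegral_congr_fun measurableSet_Ioo
    intro s hs
    simp only [smul_eq_mul]
    rw [abs_neg, abs_of_pos hAB', show A - (A - (A - B) * s) = (A - B) * s by ring,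
      show A - (A - B) * s - B = (A - B) * (1 - s) by ring, Real.mul_rpow hAB'.le hs.1.le,
      Real.mul_rpow hAB'.le (by linarith [hs.2]),
      show 2 * β₂ - 1 = 1 + (β₂ - 1) + (β₂ - 1) by ring, Real.rpow_add hAB', Real.rpow_add hAB',
      Real.rpow_one]
    ring
  rw [hint, ← hfinal.tsum_eq, ← tsum_mul_left, appellF2, ← tsum_mul_left]
  congr 1
  ext p
  rw [hKdef]
  simp only [hD]
  rw [rpoch_add', neg_add, Real.rpow_add hA0, Real.rpow_neg hA0.le (p.1 : ℝ), Real.rpow_natCast,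
    Real.rpow_neg (by norm_num) α, one_div_pow, ← two_mul]
  field_simp
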